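/- Let f be a standard solution family. Then for all z, λ ∈ ℂ one has conj(f(z, λ)) = f(conj z, conj λ), where conj denotes complex conjugation. -/

import Mathlib

open Complex

/-- `f : ℂ × ℂ → ℂ` is a standard solution family for `f'' = (z³ + λ) f`:
for each `λ` the map `z ↦ f(z,λ)` is entire and solves the ODE, and it has the
Liouville–Green asymptotics `f(z,λ) = z^{-3/4} e^{-(2/5) z^{5/2}} (1 + O(z^{-1/2}))`
as `z → ∞` in the sector `|arg z| ≤ 3π/5 - ε`, uniformly for `λ` in compact sets. -/
def IsStdSolutionFamily (f : ℂ → ℂ → ℂ) : Prop :=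
  (∀ lam : ℂ, Differentiable ℂ (fun z => f z lam) ∧
    ∀ z : ℂ, deriv (deriv (fun w => f w lam)) z = (z ^ 3 + lam) * f z lam) ∧
  (∀ ε > (0 : ℝ), ∀ L : Set ℂ, IsCompact L →
    ∃ C > (0 : ℝ), ∃ R > (0 : ℝ), ∀ lam ∈ L, ∀ z : ℂ,
      R ≤ ‖z‖ → |Complex.arg z| ≤ 3 * Real.pi / 5 - ε →
      ‖f z lam * z ^ ((3 : ℂ) / 4) *
          Complex.exp ((2 / 5 : ℂ) * z ^ ((5 : ℂ) / 2)) - 1‖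
        ≤ C * ‖z‖ ^ (-(1 / 2) : ℝ))

/-!
If `y(z)` solves `y'' = (z³ + λ) y`, then `conj (y (conj z))` solves the equation with parameter
`conj λ`, and it has the same normalisation along the positive real axis, where the normalising
factor is real. Such a solution is unique: two of them decay along the axis while their derivatives
stay bounded, so their Wronskian, which is constant, vanishes; hence they are proportional, and the
common normalisation makes the factor of proportionality `1`.
-/

open Filter Topology Asymptotics ComplexConjugate

section BoundedDerivative

variable {E : Type*} [NormedAddCommGroup E] [NormedSpace ℝ E]

theorem norm_deriv_le_of_hasDerivAt_Icc {φ φ' φ'' : ℝ → E} {x B C : ℝ}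
    (hφ : ∀ t ∈ Set.Icc x (x + 1), HasDerivAt φ (φ' t) t)
    (hφ' : ∀ t ∈ Set.Icc x (x + 1), HasDerivAt φ' (φ'' t) t)
    (hB : ∀ t ∈ Set.Icc x (x + 1), ‖φ t‖ ≤ B) (hC : ∀ t ∈ Set.Icc x (x + 1), ‖φ'' t‖ ≤ C) :
    ‖φ' x‖ ≤ 2 * B + C := by
  have hx : x ∈ Set.Icc x (x + 1) := by simp
  have hx₁ : x + 1 ∈ Set.Icc x (x + 1) := by simp
  have hC₀ : 0 ≤ C := (norm_nonneg _).trans (hC x hx)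
  have hincr (t : ℝ) (ht : t ∈ Set.Icc x (x + 1)) : ‖φ' t - φ' x‖ ≤ C := by
    have hlip := (convex_Icc x (x + 1)).norm_image_sub_le_of_norm_hasDerivWithin_le
      (fun s hs => (hφ' s hs).hasDerivWithinAt) hC hx ht
    have hdist : ‖t - x‖ ≤ 1 := by
      rw [Real.norm_of_nonneg (by linarith [ht.1])]
      linarith [ht.2]
    exact hlip.trans (mul_le_of_le_one_right hC₀ hdist)
  have hremainder : ‖φ (x + 1) - φ x - φ' x‖ ≤ C := by
    have hderiv (t : ℝ) (ht : t ∈ Set.Icc x (x + 1)) :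
        HasDerivWithinAt (fun s => φ s - s • φ' x) (φ' t - φ' x) (Set.Icc x (x + 1)) t := by
      simpa using ((hφ t ht).fun_sub ((hasDerivAt_id t).smul_const (φ' x))).hasDerivWithinAt
    have h := (convex_Icc x (x + 1)).norm_image_sub_le_of_norm_hasDerivWithin_le
      hderiv hincr hx hx₁
    have hsplit : φ (x + 1) - (x + 1) • φ' x - (φ x - x • φ' x) = φ (x + 1) - φ x - φ' x := by
      module
    simpa [hsplit] using h
  calc ‖φ' x‖ = ‖φ (x + 1) - φ x - (φ (x + 1) - φ x - φ' x)‖ := by congr 1; abel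
    _ ≤ ‖φ (x + 1)‖ + ‖φ x‖ + ‖φ (x + 1) - φ x - φ' x‖ :=
      (norm_sub_le _ _).trans (by gcongr; exact norm_sub_le _ _)
    _ ≤ 2 * B + C := by linarith [hB x hx, hB (x + 1) hx₁]

theorem isBigO_one_deriv_of_isBigO_one {φ φ' φ'' : ℝ → E}
    (hφ : ∀ᶠ x in atTop, HasDerivAt φ (φ' x) x) (hφ' : ∀ᶠ x in atTop, HasDerivAt φ' (φ'' x) x)
    (hb : φ =O[atTop] fun _ => (1 : ℝ)) (hb'' : φ'' =O[atTop] fun _ => (1 : ℝ)) :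
    φ' =O[atTop] fun _ => (1 : ℝ) := by
  obtain ⟨B, hB⟩ := hb.bound
  obtain ⟨C, hC⟩ := hb''.bound
  obtain ⟨X, hX⟩ := eventually_atTop.1 (hφ.and (hφ'.and (hB.and hC)))
  refine IsBigO.of_bound (2 * B + C) ?_
  filter_upwards [eventually_ge_atTop X] with x hx
  have hX' (t : ℝ) (ht : t ∈ Set.Icc x (x + 1)) := hX t (hx.trans ht.1)
  simpa using norm_deriv_le_of_hasDerivAt_Icc (fun t ht => (hX' t ht).1)
    (fun t ht => (hX' t ht).2.1) (fun t ht => by simpa using (hX' t ht).2.2.1)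
    (fun t ht => by simpa using (hX' t ht).2.2.2)

end BoundedDerivative

theorem isBigO_inv_of_tendsto_mul {α 𝕜 : Type*} [NormedField 𝕜] {l : Filter α} {g a : α → 𝕜}
    {ℓ : 𝕜} (ha : ∀ᶠ x in l, a x ≠ 0) (h : Tendsto (fun x => g x * a x) l (𝓝 ℓ)) :
    g =O[l] fun x => (a x)⁻¹ := by
  have hO := (h.isBigO_one 𝕜).mul (isBigO_refl (fun x => (a x)⁻¹) l)
  refine hO.congr' ?_ (by simp)
  filter_upwards [ha] with x hx
  exact mul_inv_cancel_right₀ hx (g x)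

/-- The Wronskian `u v' - u' v` of two functions of a complex variable. -/
noncomputable def wronskian (u v : ℂ → ℂ) (z : ℂ) : ℂ :=
  u z * deriv v z - deriv u z * v z

theorem exists_eq_const_smul_of_wronskian_eq_zero {u v : ℂ → ℂ} (hu : Differentiable ℂ u)
    (hv : Differentiable ℂ v) (hW : wronskian u v = 0) (hv₀ : v ≠ 0) : ∃ c : ℂ, u = c • v := by
  obtain ⟨z₀, hz₀⟩ := Function.ne_iff.1 hv₀
  obtain ⟨r, hr, hvr⟩ := Metric.eventually_nhds_iff_ball.1
    (hv.continuous.continuousAt.eventually_ne hz₀)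
  have hquot (z : ℂ) (hz : z ∈ Metric.ball z₀ r) : HasDerivAt (u / v) 0 z := by
    refine ((hu z).hasDerivAt.div (hv z).hasDerivAt (hvr z hz)).congr_deriv ?_
    have hWz : u z * deriv v z - deriv u z * v z = 0 := congrFun hW z
    rw [div_eq_zero_iff]
    left
    linear_combination -hWz
  obtain ⟨c, hc⟩ := Metric.isOpen_ball.exists_is_const_of_deriv_eq_zero
    (convex_ball z₀ r).isPreconnected
    (fun z hz => (hquot z hz).differentiableAt.differentiableWithinAt)
    (fun z hz => (hquot z hz).deriv)
  refine ⟨c, AnalyticOnNhd.eq_of_eventuallyEq (z₀ := z₀) (fun z _ => hu.analyticAt z)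
    (fun z _ => (hv.const_smul c).analyticAt z) ?_⟩
  filter_upwards [Metric.ball_mem_nhds z₀ hr] with z hz
  exact (div_eq_iff (hvr z hz)).1 (hc z hz)

/-- `y` is an entire solution of the linear differential equation `y'' = q y`. -/
structure IsEntireSolution (q y : ℂ → ℂ) : Prop where
  differentiable : Differentiable ℂ y
  deriv_deriv : ∀ z, deriv (deriv y) z = q z * y z

namespace IsEntireSolution

variable {q u v y : ℂ → ℂ}

theorem hasDerivAt (hy : IsEntireSolution q y) (z : ℂ) : HasDerivAt y (deriv y z) z :=
  (hy.differentiable z).hasDerivAt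

theorem hasDerivAt_deriv (hy : IsEntireSolution q y) (z : ℂ) :
    HasDerivAt (deriv y) (q z * y z) z :=
  hy.deriv_deriv z ▸ (hy.differentiable.deriv z).hasDerivAt

theorem conj_conj (hy : IsEntireSolution q y) :
    IsEntireSolution (conj ∘ q ∘ conj) (conj ∘ y ∘ conj) where
  differentiable z := differentiableAt_conj_conj_iff.2 (hy.differentiable (conj z))
  deriv_deriv z := by simp [hy.deriv_deriv]

theorem wronskian_eq (hu : IsEntireSolution q u) (hv : IsEntireSolution q v) (z w : ℂ) :
    wronskian u v z = wronskian u v w := by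
  have hW (z : ℂ) : HasDerivAt (wronskian u v) 0 z :=
    (((hu.hasDerivAt z).mul (hv.hasDerivAt_deriv z)).sub
      ((hu.hasDerivAt_deriv z).mul (hv.hasDerivAt z))).congr_deriv (by ring)
  exact is_const_of_deriv_eq_zero (fun z => (hW z).differentiableAt) (fun z => (hW z).deriv) z w

theorem isBigO_one_deriv (hy : IsEntireSolution q y)
    (hb : (fun x : ℝ => y x) =O[atTop] fun _ => (1 : ℝ))
    (hqb : (fun x : ℝ => q x * y x) =O[atTop] fun _ => (1 : ℝ)) :
    (fun x : ℝ => deriv y x) =O[atTop] fun _ => (1 : ℝ) :=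
  isBigO_one_deriv_of_isBigO_one (.of_forall fun x => (hy.hasDerivAt x).comp_ofReal)
    (.of_forall fun x => (hy.hasDerivAt_deriv x).comp_ofReal) hb hqb

theorem wronskian_eq_zero (hu : IsEntireSolution q u) (hv : IsEntireSolution q v)
    (hu₀ : Tendsto (fun x : ℝ => u x) atTop (𝓝 0)) (hv₀ : Tendsto (fun x : ℝ => v x) atTop (𝓝 0))
    (hqu : (fun x : ℝ => q x * u x) =O[atTop] fun _ => (1 : ℝ))
    (hqv : (fun x : ℝ => q x * v x) =O[atTop] fun _ => (1 : ℝ)) : wronskian u v = 0 := by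
  have hu' := hu.isBigO_one_deriv (hu₀.isBigO_one ℝ) hqu
  have hv' := hv.isBigO_one_deriv (hv₀.isBigO_one ℝ) hqv
  have hlim : Tendsto (fun x : ℝ => wronskian u v x) atTop (𝓝 0) := by
    simpa [wronskian] using (hu₀.zero_mul_isBoundedUnder_le ((isBigO_one_iff ℝ).1 hv')).sub
      (isBoundedUnder_le_mul_tendsto_zero ((isBigO_one_iff ℝ).1 hu') hv₀)
  funext z
  exact tendsto_nhds_unique
    (tendsto_const_nhds.congr fun x : ℝ => hu.wronskian_eq hv z x) hlim

theorem eq_of_tendsto_mul {a : ℝ → ℂ} {ℓ : ℂ} (hu : IsEntireSolution q u)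
    (hv : IsEntireSolution q v) (ha : (fun _ => (1 : ℝ)) =o[atTop] a)
    (hqa : (fun x : ℝ => q x) =O[atTop] a) (hℓ : ℓ ≠ 0)
    (hua : Tendsto (fun x : ℝ => u x * a x) atTop (𝓝 ℓ))
    (hva : Tendsto (fun x : ℝ => v x * a x) atTop (𝓝 ℓ)) : u = v := by
  have ha_norm : Tendsto (fun x => ‖a x‖) atTop atTop := (isLittleO_one_left_iff ℝ).1 ha
  have ha₀ : ∀ᶠ x in atTop, a x ≠ 0 :=
    (ha_norm.eventually_gt_atTop 0).mono fun _ => norm_pos_iff.1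
  have ha_inv : Tendsto (fun x => (a x)⁻¹) atTop (𝓝 0) :=
    tendsto_inv₀_cobounded.comp (tendsto_norm_atTop_iff_cobounded.1 ha_norm)
  have ha_mul_inv : (fun x => a x * (a x)⁻¹) =O[atTop] fun _ => (1 : ℝ) :=
    (tendsto_const_nhds.congr' (ha₀.mono fun _ hx => (mul_inv_cancel₀ hx).symm)).isBigO_one ℝ
  have huO := isBigO_inv_of_tendsto_mul ha₀ hua
  have hvO := isBigO_inv_of_tendsto_mul ha₀ hva
  have hW : wronskian u v = 0 :=
    hu.wronskian_eq_zero hv (huO.trans_tendsto ha_inv) (hvO.trans_tendsto ha_inv)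
      ((hqa.mul huO).trans ha_mul_inv) ((hqa.mul hvO).trans ha_mul_inv)
  have hv₀ : v ≠ 0 := by
    rintro rfl
    exact hℓ (tendsto_nhds_unique hva (by simp))
  obtain ⟨c, rfl⟩ := exists_eq_const_smul_of_wronskian_eq_zero hu.differentiable
    hv.differentiable hW hv₀
  have hc : c * ℓ = ℓ :=
    tendsto_nhds_unique (hva.const_mul c) (by simpa [mul_assoc] using hua)
  rw [(mul_eq_right₀ hℓ).1 hc, one_smul]

end IsEntireSolution

theorem std_solution_conj_general {Q f : ℂ → ℂ → ℂ} {a : ℝ → ℝ}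
    (hQ : ∀ z lam, conj (Q z lam) = Q (conj z) (conj lam))
    (hf : ∀ lam, IsEntireSolution (fun z => Q z lam) (fun z => f z lam))
    (ha : (fun _ => (1 : ℝ)) =o[atTop] a)
    (hQa : ∀ lam, (fun x : ℝ => Q x lam) =O[atTop] a)
    (hfa : ∀ lam, Tendsto (fun x : ℝ => f x lam * a x) atTop (𝓝 1)) (z lam : ℂ) :
    conj (f z lam) = f (conj z) (conj lam) := by
  have hreflect : IsEntireSolution (fun w => Q w (conj lam)) (fun w => conj (f (conj w) lam)) := by
    simpa [Function.comp_def, hQ] using (hf lam).conj_conj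
  have hreflect_lim : Tendsto (fun x : ℝ => conj (f (conj (x : ℂ)) lam) * a x) atTop (𝓝 1) := by
    simpa [Function.comp_def] using (continuous_conj.tendsto 1).comp (hfa lam)
  have heq := hreflect.eq_of_tendsto_mul (hf (conj lam)) (isLittleO_ofReal_right.2 ha)
    (isBigO_ofReal_right.2 (hQa (conj lam))) one_ne_zero hreflect_lim (hfa (conj lam))
  simpa using congrFun heq (conj z)

/-- The reciprocal `x^{3/4} e^{(2/5) x^{5/2}}` of the Liouville–Green approximation to the recessive
solution of `y'' = (x³ + λ) y`, for `x ≥ 0`. -/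
noncomputable def liouvilleGreenFactor (x : ℝ) : ℝ :=
  x ^ (3 / 4 : ℝ) * Real.exp (2 / 5 * x ^ (5 / 2 : ℝ))

theorem ofReal_liouvilleGreenFactor {x : ℝ} (hx : 0 ≤ x) :
    (liouvilleGreenFactor x : ℂ) =
      (x : ℂ) ^ ((3 : ℂ) / 4) * Complex.exp ((2 / 5 : ℂ) * (x : ℂ) ^ ((5 : ℂ) / 2)) := by
  simp [liouvilleGreenFactor, Complex.ofReal_cpow hx]

theorem exp_le_liouvilleGreenFactor {x : ℝ} (hx : 1 ≤ x) :
    Real.exp (2 / 5 * x) ≤ liouvilleGreenFactor x := by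
  have hpow : x ≤ x ^ (5 / 2 : ℝ) := Real.self_le_rpow_of_one_le hx (by norm_num)
  calc Real.exp (2 / 5 * x) ≤ Real.exp (2 / 5 * x ^ (5 / 2 : ℝ)) := by gcongr
    _ ≤ liouvilleGreenFactor x :=
      le_mul_of_one_le_left (Real.exp_nonneg _) (Real.one_le_rpow hx (by norm_num))

theorem pow_isLittleO_liouvilleGreenFactor (k : ℕ) :
    (fun x : ℝ => x ^ k) =o[atTop] liouvilleGreenFactor := by
  refine (isLittleO_pow_exp_pos_mul_atTop k (by norm_num : (0 : ℝ) < 2 / 5)).trans_isBigO ?_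
  refine IsBigO.of_bound' ?_
  filter_upwards [eventually_ge_atTop 1] with x hx
  rw [Real.norm_of_nonneg (Real.exp_nonneg _)]
  exact (exp_le_liouvilleGreenFactor hx).trans (le_abs_self _)

theorem cube_add_isBigO_liouvilleGreenFactor (lam : ℂ) :
    (fun x : ℝ => (x : ℂ) ^ 3 + lam) =O[atTop] liouvilleGreenFactor := by
  have hcube : (fun x : ℝ => (x : ℂ) ^ 3) =O[atTop] liouvilleGreenFactor := by
    simpa using isBigO_ofReal_left.2 (pow_isLittleO_liouvilleGreenFactor 3).isBigO
  have hone : (fun _ => (1 : ℝ)) =O[atTop] liouvilleGreenFactor := by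
    simpa using (pow_isLittleO_liouvilleGreenFactor 0).isBigO
  exact hcube.add ((isBigO_const_const lam one_ne_zero atTop).trans hone)

theorem IsStdSolutionFamily.tendsto_mul_liouvilleGreenFactor {f : ℂ → ℂ → ℂ}
    (hf : IsStdSolutionFamily f) (lam : ℂ) :
    Tendsto (fun x : ℝ => f x lam * liouvilleGreenFactor x) atTop (𝓝 1) := by
  obtain ⟨C, -, R, hR, hbound⟩ := hf.2 (Real.pi / 5) (by positivity) {lam} isCompact_singleton
  have hdecay : Tendsto (fun x : ℝ => C * x ^ (-(1 / 2) : ℝ)) atTop (𝓝 0) := by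
    simpa using (tendsto_rpow_neg_atTop (y := 1 / 2) (by norm_num)).const_mul C
  rw [tendsto_iff_norm_sub_tendsto_zero]
  refine squeeze_zero' (.of_forall fun _ => norm_nonneg _) ?_ hdecay
  filter_upwards [eventually_ge_atTop R] with x hx
  have hx₀ : 0 ≤ x := hR.le.trans hx
  have hnorm : ‖(x : ℂ)‖ = x := Complex.norm_of_nonneg hx₀
  have harg : |Complex.arg x| ≤ 3 * Real.pi / 5 - Real.pi / 5 := by
    rw [Complex.arg_ofReal_of_nonneg hx₀, abs_zero]
    linarith [Real.pi_pos]
  simpa only [ofReal_liouvilleGreenFactor hx₀, mul_assoc, hnorm] using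
    hbound lam rfl x (hx.trans_eq hnorm.symm) harg

/-- The standard solution is real in the sense `conj (f(z,λ)) = f(conj z, conj λ)`. -/
theorem std_solution_conj (f : ℂ → ℂ → ℂ) (hf : IsStdSolutionFamily f) :
    ∀ z lam : ℂ, (starRingEnd ℂ) (f z lam) = f ((starRingEnd ℂ) z) ((starRingEnd ℂ) lam) :=
  std_solution_conj_general (Q := fun z lam => z ^ 3 + lam) (by simp)
    (fun lam => ⟨(hf.1 lam).1, (hf.1 lam).2⟩)
    (by simpa using pow_isLittleO_liouvilleGreenFactor 0)
    cube_add_isBigO_liouvilleGreenFactor hf.tendsto_mul_liouvilleGreenFactor
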